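/- Let p : ℙ¹ → ℙⁿ parameterize a non-degenerate rational curve of degree d > n by homogeneous polynomials of degree d. Then the osculating determinant Δ_p(s,t) = det[∂ⁿp/∂sⁿ, ∂ⁿp/∂sⁿ⁻¹∂t, …, ∂ⁿp/∂tⁿ] is a nonzero homogeneous form of degree (d−n)(n+1) in (s,t); in particular, the curve has only finitely many stall points. -/

import Mathlib

open Projectivization MvPolynomial

/-- The complex projective line `ℙ¹`. -/
abbrev P1 := Projectivization ℂ (Fin 2 → ℂ)

/-- The osculating determinant `Δ_p = det[∂ⁿp/∂sⁿ, ∂ⁿp/∂sⁿ⁻¹∂t, …, ∂ⁿp/∂tⁿ]`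
of a tuple `p` of `n+1` binary forms (in the variables `s = x₀`, `t = x₁`);
its zeros are the stall points of the parameterized curve. -/
noncomputable def oscDet (n : ℕ) (p : Fin (n + 1) → MvPolynomial (Fin 2) ℂ) :
    MvPolynomial (Fin 2) ℂ :=
  Matrix.det (Matrix.of fun (i j : Fin (n + 1)) =>
    (fun f => pderiv (0 : Fin 2) f)^[n - (j : ℕ)]
      ((fun f => pderiv (1 : Fin 2) f)^[(j : ℕ)] (p i)))

/-- Dehomogenization `s = 1`. -/
noncomputable def dhom : MvPolynomial (Fin 2) ℂ →ₐ[ℂ] Polynomial ℂ :=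
  MvPolynomial.aeval ![1, Polynomial.X]

lemma dhom_monomial (m : Fin 2 →₀ ℕ) (r : ℂ) :
    dhom (monomial m r) = Polynomial.C r * Polynomial.X ^ (m 1) := by
  simp [dhom, MvPolynomial.aeval_monomial, Finsupp.prod_fintype]

lemma iter_monomial (i : Fin 2) (k : ℕ) (m : Fin 2 →₀ ℕ) (r : ℂ) :
    (fun f => pderiv i f)^[k] (monomial m r) =
      monomial (m - Finsupp.single i k) (r * ((m i).descFactorial k : ℂ)) := by
  induction k with
  | zero => simp
  | succ k ih =>
    rw [Function.iterate_succ_apply', ih, pderiv_monomial, tsub_tsub, ← Finsupp.single_add]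
    congr 1
    rw [Nat.descFactorial_succ]
    simp
    ring

lemma iter_sum (i : Fin 2) (k : ℕ) {ι : Type*} (s : Finset ι)
    (f : ι → MvPolynomial (Fin 2) ℂ) :
    (fun f => pderiv i f)^[k] (∑ x ∈ s, f x) = ∑ x ∈ s, (fun f => pderiv i f)^[k] (f x) := by
  induction k with
  | zero => simp
  | succ k ih => simp only [Function.iterate_succ_apply', ih, map_sum]

lemma iter_homog (i : Fin 2) (k d : ℕ) (p : MvPolynomial (Fin 2) ℂ) (hp : p.IsHomogeneous d) :
    ((fun f => pderiv i f)^[k] p).IsHomogeneous (d - k) := by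
  induction k with
  | zero => simpa
  | succ k ih =>
    rw [Function.iterate_succ_apply']
    exact ih.pderiv

lemma degree_two (m : Fin 2 →₀ ℕ) : m.degree = m 0 + m 1 := by
  simp [Finsupp.degree_eq_sum]

lemma key_coeff (k l d : ℕ) (p : MvPolynomial (Fin 2) ℂ) (hp : p.IsHomogeneous d) (a : ℕ) :
    (Polynomial.X ^ l * dhom ((fun f => pderiv (0 : Fin 2) f)^[k]
      ((fun f => pderiv (1 : Fin 2) f)^[l] p))).coeff a =
    ((d - a).descFactorial k : ℂ) * (a.descFactorial l : ℂ) * (dhom p).coeff a := by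
  have h1 : p = ∑ m ∈ p.support, monomial m (p.coeff m) := p.as_sum
  conv_lhs => rw [h1]
  conv_rhs => rw [h1]
  rw [iter_sum, iter_sum, map_sum, map_sum, Finset.mul_sum, Polynomial.finsetSum_coeff,
    Polynomial.finsetSum_coeff, Finset.mul_sum]
  refine Finset.sum_congr rfl fun m hm => ?_
  have hdeg : m 0 + m 1 = d := by
    rw [← degree_two]; exact hp.degree_eq_sum_deg_support hm |>.symm
  rw [iter_monomial, iter_monomial, dhom_monomial, dhom_monomial]
  by_cases hl : m 1 < l
  · rw [Polynomial.coeff_C_mul_X_pow]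
    split_ifs with h
    · subst h
      simp [Nat.descFactorial_of_lt hl]
    · simp [Nat.descFactorial_of_lt hl]
  · push Not at hl
    have e : (m - Finsupp.single 1 l - Finsupp.single 0 k : Fin 2 →₀ ℕ) 1 = m 1 - l := by simp
    rw [e, mul_left_comm, ← pow_add, Nat.add_sub_cancel' hl, Polynomial.coeff_C_mul_X_pow,
      Polynomial.coeff_C_mul_X_pow]
    split_ifs with h
    · subst h
      have : d - m 1 = m 0 := by omega
      rw [this]
      simp
      ring
    · simp

lemma dhom_coeff (d : ℕ) (p : MvPolynomial (Fin 2) ℂ) (hp : p.IsHomogeneous d)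
    (m : Fin 2 →₀ ℕ) (hm : m 0 + m 1 = d) : (dhom p).coeff (m 1) = p.coeff m := by
  conv_lhs => rw [p.as_sum]
  rw [map_sum, Polynomial.finsetSum_coeff]
  simp only [dhom_monomial, Polynomial.coeff_C_mul_X_pow]
  rw [Finset.sum_eq_single m]
  · simp
  · intro b hb hbm
    have hdeg : b 0 + b 1 = d := by
      rw [← degree_two]; exact hp.degree_eq_sum_deg_support hb |>.symm
    rw [if_neg]
    intro h
    apply hbm
    ext i
    fin_cases i
    · simp; omega
    · simp; omega
  · intro h
    simpa using h

lemma dhom_inj (d : ℕ) (p : MvPolynomial (Fin 2) ℂ) (hp : p.IsHomogeneous d)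
    (h : dhom p = 0) : p = 0 := by
  ext m
  by_cases hm : m.degree = d
  · rw [← dhom_coeff d p hp m (by rw [← degree_two]; exact hm), h]; simp
  · rw [hp.coeff_eq_zero hm]; simp

lemma dhom_natDegree (d : ℕ) (p : MvPolynomial (Fin 2) ℂ) (hp : p.IsHomogeneous d) :
    (dhom p).natDegree ≤ d := by
  conv_lhs => rw [p.as_sum]
  rw [map_sum]
  apply Polynomial.natDegree_sum_le_of_forall_le
  intro b hb
  have hdeg : b 0 + b 1 = d := by
    rw [← degree_two]; exact hp.degree_eq_sum_deg_support hb |>.symm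
  rw [dhom_monomial]
  exact (Polynomial.natDegree_C_mul_X_pow_le _ _).trans (by omega)

lemma dhom_eval (p : MvPolynomial (Fin 2) ℂ) (t : ℂ) :
    (dhom p).eval t = MvPolynomial.eval ![1, t] p := by
  rw [p.as_sum, map_sum, map_sum, Polynomial.eval_finsetSum]
  refine Finset.sum_congr rfl fun m _ => ?_
  rw [dhom_monomial, MvPolynomial.eval_monomial]
  simp [Finsupp.prod_fintype]

lemma homog_eval (d : ℕ) (p : MvPolynomial (Fin 2) ℂ) (hp : p.IsHomogeneous d)
    (c : ℂ) (v : Fin 2 → ℂ) :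
    MvPolynomial.eval (c • v) p = c ^ d * MvPolynomial.eval v p := by
  rw [p.as_sum, map_sum, map_sum, Finset.mul_sum]
  refine Finset.sum_congr rfl fun m hm => ?_
  have hdeg : m 0 + m 1 = d := by
    rw [← degree_two]; exact hp.degree_eq_sum_deg_support hm |>.symm
  simp [MvPolynomial.eval_monomial, Finsupp.prod_fintype, ← hdeg]
  ring

lemma finite_zeros (d : ℕ) (p : MvPolynomial (Fin 2) ℂ) (hp : p.IsHomogeneous d) (h0 : p ≠ 0) :
    {x : P1 | MvPolynomial.eval x.rep p = 0}.Finite := by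
  have hne : dhom p ≠ 0 := fun h => h0 (dhom_inj d p hp h)
  have hv : ∀ t : ℂ, (![1, t] : Fin 2 → ℂ) ≠ 0 := fun t h => by
    simpa using congrFun h 0
  have hw : (![0, 1] : Fin 2 → ℂ) ≠ 0 := fun h => by
    simpa using congrFun h 1
  refine (((Polynomial.finite_setOfPred_isRoot hne).image
    (fun t => Projectivization.mk ℂ ![1, t] (hv t))).union
    (Set.finite_singleton (Projectivization.mk ℂ ![0, 1] hw))).subset ?_
  intro x hx
  have hx' : MvPolynomial.eval x.rep p = 0 := hx
  by_cases h : x.rep 0 = 0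
  · right
    rw [Set.mem_singleton_iff, ← x.mk_rep, Projectivization.mk_eq_mk_iff']
    refine ⟨x.rep 1, ?_⟩
    ext i
    fin_cases i
    · simp [h]
    · simp
  · left
    have e : x.rep = x.rep 0 • ![1, x.rep 1 / x.rep 0] := by
      ext i
      fin_cases i
      · simp
      · simp; field_simp
    refine ⟨x.rep 1 / x.rep 0, ?_, ?_⟩
    · rw [e, homog_eval d p hp] at hx'
      have := (mul_eq_zero.1 hx').resolve_left (pow_ne_zero _ h)
      simpa [Polynomial.IsRoot, dhom_eval] using this
    · dsimp only
      conv_rhs => rw [← x.mk_rep]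
      rw [Projectivization.mk_eq_mk_iff']
      refine ⟨(x.rep 0)⁻¹, ?_⟩
      ext i
      fin_cases i
      · simp [h]
      · simp; field_simp

lemma oscDet_homog (n d : ℕ) (hd : n < d)
    (p : Fin (n + 1) → MvPolynomial (Fin 2) ℂ)
    (hp : ∀ i, (p i).IsHomogeneous d) : (oscDet n p).IsHomogeneous ((d - n) * (n + 1)) := by
  unfold oscDet
  rw [Matrix.det_apply]
  refine MvPolynomial.IsHomogeneous.sum _ _ _ fun σ _ => ?_
  have h : (∏ i, (Matrix.of fun (i j : Fin (n + 1)) =>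
    (fun f => pderiv (0 : Fin 2) f)^[n - (j : ℕ)]
      ((fun f => pderiv (1 : Fin 2) f)^[(j : ℕ)] (p i))) (σ i) i).IsHomogeneous
      (∑ _i : Fin (n + 1), (d - n)) := by
    refine MvPolynomial.IsHomogeneous.prod _ _ _ fun j _ => ?_
    have := iter_homog 0 (n - j) _ _ (iter_homog 1 j d (p (σ j)) (hp _))
    have e : d - j - (n - j) = d - n := by have := j.2; omega
    rw [e] at this
    exact this
  have e : ∑ _i : Fin (n + 1), (d - n) = (d - n) * (n + 1) := by simp [mul_comm]
  rw [e] at h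
  rcases Int.units_eq_one_or (Equiv.Perm.sign σ) with hs | hs
  · rw [hs, one_smul]; exact h
  · rw [hs, Units.neg_smul, one_smul]; exact h.neg

/-- A space of dimension `n+1` of polynomials realizes at least `n+1` degrees. -/
lemma many_degrees (n d : ℕ) (g : Fin (n + 1) → Polynomial ℂ) (hg : LinearIndependent ℂ g)
    (hgd : ∀ i, (g i).natDegree ≤ d) :
    ∃ A : Finset ℕ, n + 1 ≤ A.card ∧ ∀ a ∈ A, a ≤ d ∧ ∃ c : Fin (n + 1) → ℂ,
      (∑ i, c i • g i) ≠ 0 ∧ (∑ i, c i • g i).natDegree = a := by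
  classical
  let A : Finset ℕ := (Finset.range (d + 1)).filter fun a => ∃ c : Fin (n + 1) → ℂ,
      (∑ i, c i • g i) ≠ 0 ∧ (∑ i, c i • g i).natDegree = a
  have hdeg : ∀ c : Fin (n + 1) → ℂ, (∑ i, c i • g i).natDegree ≤ d := fun c =>
    Polynomial.natDegree_sum_le_of_forall_le _ _
      fun i _ => (Polynomial.natDegree_smul_le _ _).trans (hgd i)
  refine ⟨A, ?_, fun a ha => ?_⟩
  · let T : (Fin (n + 1) → ℂ) →ₗ[ℂ] (A → ℂ) :=
      (LinearMap.pi fun a : A => Polynomial.lcoeff ℂ (a : ℕ)) ∘ₗ Fintype.linearCombination ℂ g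
    have hT : Function.Injective T := by
      rw [← LinearMap.ker_eq_bot, LinearMap.ker_eq_bot']
      intro c hc
      by_contra hne
      have h0 : (∑ i, c i • g i) ≠ 0 := by
        intro h
        exact hne (funext (Fintype.linearIndependent_iff.1 hg c h))
      have hmem : (∑ i, c i • g i).natDegree ∈ A := by
        simp only [A, Finset.mem_filter, Finset.mem_range]
        exact ⟨Nat.lt_succ_of_le (hdeg c), c, h0, rfl⟩
      have := congrFun hc ⟨_, hmem⟩
      simp only [T, LinearMap.comp_apply, LinearMap.pi_apply, Fintype.linearCombination_apply,
        Polynomial.lcoeff_apply, Pi.zero_apply] at this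
      exact h0 (Polynomial.leadingCoeff_eq_zero.1 this)
    have := LinearMap.finrank_le_finrank_of_injective hT
    simpa using this
  · simp only [A, Finset.mem_filter, Finset.mem_range] at ha
    exact ⟨by omega, ha.2⟩

/-- The indicial polynomials are linearly independent on any `n+1` points. -/
lemma indicial (n d : ℕ) (hd : n < d) (A : Finset ℕ) (hA : n + 1 ≤ A.card)
    (hAd : ∀ a ∈ A, a ≤ d) (c : Fin (n + 1) → ℂ)
    (h : ∀ a ∈ A, ∑ j : Fin (n + 1), c j *
      (((d - a).descFactorial (n - j) : ℂ) * (a.descFactorial j : ℂ)) = 0) : c = 0 := by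
  let q : Polynomial ℂ := ∑ j : Fin (n + 1), Polynomial.C (c j) *
    ((descPochhammer ℂ (n - j)).comp (Polynomial.C (d : ℂ) - Polynomial.X) *
      descPochhammer ℂ j)
  have hq : ∀ a : ℕ, a ≤ d → q.eval (a : ℂ) = ∑ j : Fin (n + 1), c j *
      (((d - a).descFactorial (n - j) : ℂ) * (a.descFactorial j : ℂ)) := by
    intro a ha
    simp only [q, Polynomial.eval_finsetSum]
    refine Finset.sum_congr rfl fun j _ => ?_
    rw [← descPochhammer_eval_eq_descFactorial, ← descPochhammer_eval_eq_descFactorial]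
    simp [Nat.cast_sub ha]
  have hqd : q.natDegree ≤ n := by
    apply Polynomial.natDegree_sum_le_of_forall_le
    intro j _
    refine (Polynomial.natDegree_C_mul_le _ _).trans (Polynomial.natDegree_mul_le.trans ?_)
    rw [Polynomial.natDegree_comp, descPochhammer_natDegree, descPochhammer_natDegree]
    have h1 : (Polynomial.C (d : ℂ) - Polynomial.X).natDegree ≤ 1 :=
      (Polynomial.natDegree_sub_le _ _).trans (by simp)
    have := j.2
    calc _ ≤ (n - j) * 1 + (j : ℕ) := by gcongr
      _ ≤ n := by omega
  have hq0 : q = 0 := by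
    apply Polynomial.eq_zero_of_natDegree_lt_card_of_eval_eq_zero' q
      (A.map ⟨fun a : ℕ => (a : ℂ), Nat.cast_injective⟩)
    · intro x hx
      obtain ⟨a, ha, rfl⟩ := Finset.mem_map.1 hx
      exact (hq a (hAd a ha)).trans (h a ha)
    · rw [Finset.card_map]; omega
  have main : ∀ k : ℕ, ∀ hk : k < n + 1, c ⟨k, hk⟩ = 0 := by
    intro k
    induction k using Nat.strong_induction_on with
    | _ k ih =>
      intro hk
      have e := hq k (by omega)
      rw [hq0, Polynomial.eval_zero, Finset.sum_eq_single ⟨k, hk⟩] at e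
      · rcases mul_eq_zero.1 e.symm with h | h
        · exact h
        · exfalso
          have h1 : (d - k).descFactorial (n - k) ≠ 0 := by
            rw [Ne, Nat.descFactorial_eq_zero_iff_lt]; omega
          have h2 : k.descFactorial k ≠ 0 := by
            rw [Ne, Nat.descFactorial_eq_zero_iff_lt]; omega
          exact mul_ne_zero (Nat.cast_ne_zero.2 h1) (Nat.cast_ne_zero.2 h2) h
      · intro j _ hj
        rcases lt_trichotomy (j : ℕ) k with h | h | h
        · rw [show c j = 0 from ih j h j.2]; simp
        · exact absurd (Fin.ext h) hj
        · simp [Nat.descFactorial_of_lt h]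
      · simp
  funext j
  exact main j j.2

lemma oscDet_ne (n d : ℕ) (hd : n < d)
    (p : Fin (n + 1) → MvPolynomial (Fin 2) ℂ)
    (hp : ∀ i, (p i).IsHomogeneous d)
    (hpli : LinearIndependent ℂ p) : oscDet n p ≠ 0 := by
  classical
  intro hdet
  have hdet' := congrArg dhom hdet
  unfold oscDet at hdet'
  rw [map_zero, AlgHom.map_det] at hdet'
  obtain ⟨v, hv0, hv⟩ := Matrix.exists_mulVec_eq_zero_iff.2 hdet'
  have hcomb : ∀ c : Fin (n + 1) → ℂ, (∑ i, c i • p i).IsHomogeneous d := fun c =>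
    MvPolynomial.IsHomogeneous.sum _ _ _ fun i _ => by
      rw [MvPolynomial.smul_eq_C_mul]; exact (hp i).C_mul _
  have hgli : LinearIndependent ℂ (fun i => dhom (p i)) := by
    rw [Fintype.linearIndependent_iff]
    intro c hc
    apply Fintype.linearIndependent_iff.1 hpli c
    apply dhom_inj d _ (hcomb c)
    simpa using hc
  obtain ⟨A, hA, hA'⟩ := many_degrees n d _ hgli fun i => dhom_natDegree d _ (hp i)
  -- diagonalized columns
  let V : Fin (n + 1) → Polynomial ℂ := fun j => Polynomial.X ^ (n - (j : ℕ)) * v j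
  let H : Fin (n + 1) → Fin (n + 1) → Polynomial ℂ := fun i j =>
    Polynomial.X ^ (j : ℕ) * dhom ((fun f => pderiv (0 : Fin 2) f)^[n - (j : ℕ)]
      ((fun f => pderiv (1 : Fin 2) f)^[(j : ℕ)] (p i)))
  have hVH : ∀ i, ∑ j, V j * H i j = 0 := by
    intro i
    have h := congrFun hv i
    simp only [Matrix.mulVec, dotProduct, AlgHom.mapMatrix_apply, Matrix.map_apply,
      Matrix.of_apply, Pi.zero_apply] at h
    have h2 := congrArg (fun q => Polynomial.X ^ n * q) h
    simp only [mul_zero, Finset.mul_sum] at h2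
    rw [← h2]
    refine Finset.sum_congr rfl fun j _ => ?_
    have e : (Polynomial.X : Polynomial ℂ) ^ n
        = Polynomial.X ^ (n - (j : ℕ)) * Polynomial.X ^ (j : ℕ) := by
      rw [← pow_add]; congr 1; have := j.2; omega
    simp only [V, H]
    rw [e]
    ring
  let w := Finset.univ.sup fun j => (V j).natDegree
  have hw : ∀ j, (V j).natDegree ≤ w := fun j =>
    Finset.le_sup (f := fun j => (V j).natDegree) (Finset.mem_univ j)
  have hc0 : (fun j => (V j).coeff w) = 0 := by
    apply indicial n d hd A hA (fun a ha => (hA' a ha).1)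
    intro a ha
    obtain ⟨had, c, hne, hdeg⟩ := hA' a ha
    set f := ∑ i, c i • dhom (p i) with hf
    let G : Fin (n + 1) → Polynomial ℂ := fun j => ∑ i, c i • H i j
    have hG : ∀ j b, (G j).coeff b = ((d - b).descFactorial (n - j) : ℂ) *
        (b.descFactorial j : ℂ) * f.coeff b := by
      intro j b
      simp only [G, hf, Polynomial.finsetSum_coeff, Polynomial.coeff_smul, H, Finset.mul_sum]
      refine Finset.sum_congr rfl fun i _ => ?_
      rw [key_coeff (n - j) j d (p i) (hp i) b]
      simp only [smul_eq_mul]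
      ring
    have hGd : ∀ j, (G j).natDegree ≤ a := by
      intro j
      rw [Polynomial.natDegree_le_iff_coeff_eq_zero]
      intro b hb
      rw [hG, Polynomial.coeff_eq_zero_of_natDegree_lt (by omega), mul_zero]
    have hVG : ∑ j, V j * G j = 0 := by
      simp only [G, Finset.mul_sum, mul_smul_comm]
      rw [Finset.sum_comm]
      refine Finset.sum_eq_zero fun i _ => ?_
      rw [← Finset.smul_sum, hVH, smul_zero]
    have h := congrArg (fun q => Polynomial.coeff q (w + a)) hVG
    simp only [Polynomial.finsetSum_coeff, Polynomial.coeff_zero] at h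
    have hlead : f.coeff a ≠ 0 := by
      rw [← hdeg]; exact Polynomial.leadingCoeff_ne_zero.2 hne
    refine (mul_eq_zero.1 ?_).resolve_right hlead
    rw [← h, Finset.sum_mul]
    refine Finset.sum_congr rfl fun j _ => ?_
    rw [Polynomial.coeff_mul_add_eq_of_natDegree_le (hw j) (hGd j), hG]
    ring
  obtain ⟨j, -, hj⟩ := Finset.exists_mem_eq_sup Finset.univ Finset.univ_nonempty
    fun j => (V j).natDegree
  have hV0 : ∀ j, V j = 0 := by
    have hwj : V j = 0 := by
      rw [← Polynomial.leadingCoeff_eq_zero, Polynomial.leadingCoeff, ← hj]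
      exact congrFun hc0 j
    have hw0 : w = 0 := by
      have : w = (V j).natDegree := hj
      rw [this, hwj, Polynomial.natDegree_zero]
    intro k
    have h1 := hw k
    have h2 := congrFun hc0 k
    simp only [hw0, Pi.zero_apply] at h1 h2
    rw [Polynomial.eq_C_of_natDegree_le_zero h1, h2, Polynomial.C_0]
  apply hv0
  funext k
  exact (mul_eq_zero.1 (hV0 k)).resolve_left (pow_ne_zero _ Polynomial.X_ne_zero)

/-- For a non-degenerate rational curve of degree `d > n` in `ℙⁿ`,
parameterized by binary forms `p₀, …, pₙ` of degree `d` without common factor and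
linearly independent over `ℂ`, the osculating determinant `Δ_p` is a nonzero homogeneous
form of degree `(d−n)(n+1)`; in particular there are only finitely many stall points. -/
theorem oscDet_ne_zero_isHomogeneous (n d : ℕ) (hd : n < d)
    (p : Fin (n + 1) → MvPolynomial (Fin 2) ℂ)
    (hp : ∀ i, (p i).IsHomogeneous d)
    (hpgcd : ∀ r : MvPolynomial (Fin 2) ℂ, (∀ i, r ∣ p i) → IsUnit r)
    (hpli : LinearIndependent ℂ p) :
    oscDet n p ≠ 0 ∧ (oscDet n p).IsHomogeneous ((d - n) * (n + 1)) ∧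
      {x : P1 | MvPolynomial.eval x.rep (oscDet n p) = 0}.Finite := by
  have h0 := oscDet_ne n d hd p hp hpli
  have hh := oscDet_homog n d hd p hp
  exact ⟨h0, hh, finite_zeros _ _ hh h0⟩
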